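/- Let A_n = [a_n, b_n] be a sequence of compact intervals in ℝ with 0 < a_n < b_n and b_n − a_n → ∞, and assume there exist c > 1 and N such that b_n ≥ c·a_n for all n > N. Then the counting autocorrelation of ℙ with respect to (A_n) exists and equals δ_0, i.e., writing F_n = ℙ ∩ A_n, for every continuous compactly supported f : ℝ → ℂ one has (1/card F_n)·Σ_{x,y∈F_n} f(x−y) → f(0) as n → ∞. -/

import Mathlib

open Filter Topology Set

/-- The set of prime numbers together with their negatives, as a subset of `ℝ`. -/
def PrimesR : Set ℝ := {x | ∃ p : ℕ, p.Prime ∧ (x = (p : ℝ) ∨ x = -(p : ℝ))}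

/-- The (counting-normalised) autocorrelation sum of the finite sample `F` applied to a
test function `f`; interpreted as `0` when `F = ∅` (since then `(F.ncard : ℂ)⁻¹ = 0`). -/
noncomputable def autoCorr (F : Set ℝ) (f : ℝ → ℂ) : ℂ :=
  ((F.ncard : ℂ))⁻¹ * ∑ᶠ x ∈ F, ∑ᶠ y ∈ F, f (x - y)

section aux
open MeasureTheory

/-- Fejer kernel. -/
noncomputable def fejK (T u : ℝ) : ℝ := if u = 0 then T else 2 * (1 - Real.cos (T * u)) / (T * u ^ 2)

lemma fejK_nonneg {T : ℝ} (hT : 0 < T) (u : ℝ) : 0 ≤ fejK T u := by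
  unfold fejK
  split_ifs
  · exact hT.le
  · have := Real.cos_le_one (T * u)
    apply div_nonneg <;> [linarith; positivity]

lemma fejK_le {T : ℝ} (hT : 0 < T) (u : ℝ) : fejK T u ≤ T := by
  unfold fejK
  split_ifs with h
  · exact le_rfl
  · have := Real.one_sub_sq_div_two_le_cos (x := T * u)
    have h2 : 0 < u ^ 2 := by positivity
    rw [div_le_iff₀ (by positivity)]
    nlinarith

lemma sq_mul_fejK {T : ℝ} (hT : 0 < T) (u : ℝ) :
    u ^ 2 * fejK T u = 2 * (1 - Real.cos (T * u)) / T := by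
  unfold fejK
  split_ifs with h
  · simp [h]
  · field_simp

lemma fejK_ge {T : ℝ} (hT : 0 < T) {u : ℝ} (h0 : 0 ≤ u) (h : u ≤ 1 / T) : T / 4 ≤ fejK T u := by
  unfold fejK
  split_ifs with h1
  · linarith
  · have hu : T * u ≤ 1 := by rw [le_div_iff₀ hT] at h; linarith
    have hp : 0 ≤ T * u := by positivity
    have := Real.cos_le_one_sub_mul_cos_sq (x := T * u) (by
      rw [abs_of_nonneg hp]; linarith [Real.pi_gt_three])
    have hpi : (1:ℝ) / 8 ≤ 2 / Real.pi ^ 2 := by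
      rw [div_le_div_iff₀ (by norm_num) (by positivity)]
      nlinarith [Real.pi_lt_four, Real.pi_pos]
    have h2 : 0 < u ^ 2 := by positivity
    rw [le_div_iff₀ (by positivity)]
    nlinarith [mul_le_mul_of_nonneg_right hpi (sq_nonneg (T * u))]

lemma fejK_measurable (T : ℝ) : Measurable (fejK T) := by
  unfold fejK
  refine Measurable.ite (measurableSet_singleton 0) measurable_const ?_
  fun_prop

lemma fejK_le_inv {T : ℝ} (hT : 0 < T) (u : ℝ) : fejK T u ≤ (T + 4 / T) * (1 + u ^ 2)⁻¹ := by
  rw [← div_eq_mul_inv, le_div_iff₀ (by positivity)]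
  have h1 := sq_mul_fejK hT u
  have h2 := fejK_le hT u
  have h3 : 2 * (1 - Real.cos (T * u)) / T ≤ 4 / T := by
    gcongr
    linarith [Real.neg_one_le_cos (T * u)]
  linarith

lemma fejK_integrable {T : ℝ} (hT : 0 < T) : Integrable (fejK T) := by
  refine Integrable.mono' (integrable_inv_one_add_sq.const_mul (T + 4 / T))
    (fejK_measurable T).aestronglyMeasurable (ae_of_all _ fun u => ?_)
  rw [Real.norm_of_nonneg (fejK_nonneg hT u)]
  exact fejK_le_inv hT u

lemma inv_le_fejK_add (u : ℝ) : (1 + u ^ 2)⁻¹ ≤ 6 * (fejK 1 u + fejK 1 (u - Real.pi)) := by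
  have h1 := sq_mul_fejK one_pos u
  have h2 := sq_mul_fejK one_pos (u - Real.pi)
  have n1 := fejK_nonneg one_pos u
  have n2 := fejK_nonneg one_pos (u - Real.pi)
  rw [one_mul, div_one] at h1 h2
  rw [Real.cos_sub_pi] at h2
  rw [inv_le_iff_one_le_mul₀ (by positivity)]
  have hpi : Real.pi ^ 2 ≤ 10 := by nlinarith [Real.pi_lt_d2, Real.pi_pos]
  have h3 : u ^ 2 ≤ 20 * (1 + u ^ 2) := by nlinarith [sq_nonneg u]
  have h4 : (u - Real.pi) ^ 2 ≤ 20 * (1 + u ^ 2) := by nlinarith [sq_nonneg (u + Real.pi)]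
  nlinarith [mul_le_mul_of_nonneg_right h3 n1, mul_le_mul_of_nonneg_right h4 n2]

lemma fejK_fourier {T : ℝ} (hT : 0 < T) (u : ℝ) :
    ∫ t in Set.Icc (-T) T, ((1 - |t| / T : ℝ) : ℂ) * Complex.exp (t * u * Complex.I)
      = (fejK T u : ℂ) := by
  have hc : Continuous fun t : ℝ => ((1 - |t| / T : ℝ) : ℂ) * Complex.exp (t * u * Complex.I) := by
    fun_prop
  rw [integral_Icc_eq_integral_Ioc, ← intervalIntegral.integral_of_le (by linarith),
    ← intervalIntegral.integral_add_adjacent_intervals (b := 0)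
      (hc.intervalIntegrable _ _) (hc.intervalIntegrable _ _)]
  have e1 : ∫ t in (-T)..0, ((1 - |t| / T : ℝ) : ℂ) * Complex.exp (t * u * Complex.I)
      = ∫ t in (-T)..0, (1 + (t:ℂ) / T) * Complex.exp (t * u * Complex.I) := by
    apply intervalIntegral.integral_congr
    intro t ht
    rw [Set.uIcc_of_le (by linarith)] at ht
    simp only [abs_of_nonpos ht.2]
    push_cast
    ring
  have e2 : ∫ t in (0:ℝ)..T, ((1 - |t| / T : ℝ) : ℂ) * Complex.exp (t * u * Complex.I)
      = ∫ t in (0:ℝ)..T, (1 - (t:ℂ) / T) * Complex.exp (t * u * Complex.I) := by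
    apply intervalIntegral.integral_congr
    intro t ht
    rw [Set.uIcc_of_le (by linarith)] at ht
    simp only [abs_of_nonneg ht.1]
    push_cast
    ring
  rw [e1, e2]
  have hTc : (T : ℂ) ≠ 0 := by exact_mod_cast hT.ne'
  have did : ∀ t : ℝ, HasDerivAt (fun t : ℝ => (t : ℂ)) 1 t := fun t => Complex.ofRealCLM.hasDerivAt
  by_cases hu : u = 0
  · subst hu
    have d1 : ∀ t ∈ Set.uIcc (-T) 0, HasDerivAt (fun t : ℝ => (t : ℂ) + (t:ℂ) ^ 2 / (2 * T))
        ((1 + (t:ℂ) / T) * Complex.exp (t * (0:ℝ) * Complex.I)) t := by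
      intro t _
      refine ((did t).add (((did t).pow 2).div_const (2 * (T:ℂ)))).congr_deriv ?_
      simp
      field_simp
    have d2 : ∀ t ∈ Set.uIcc 0 T, HasDerivAt (fun t : ℝ => (t : ℂ) - (t:ℂ) ^ 2 / (2 * T))
        ((1 - (t:ℂ) / T) * Complex.exp (t * (0:ℝ) * Complex.I)) t := by
      intro t _
      refine ((did t).sub (((did t).pow 2).div_const (2 * (T:ℂ)))).congr_deriv ?_
      simp
      field_simp
    rw [intervalIntegral.integral_eq_sub_of_hasDerivAt d1
      (Continuous.intervalIntegrable (by fun_prop) _ _),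
      intervalIntegral.integral_eq_sub_of_hasDerivAt d2
      (Continuous.intervalIntegrable (by fun_prop) _ _)]
    simp [fejK]
    field_simp
    ring
  · have huc : (u : ℂ) ≠ 0 := by exact_mod_cast hu
    have dE : ∀ t : ℝ, HasDerivAt (fun t : ℝ => Complex.exp (t * u * Complex.I))
        (Complex.exp (t * u * Complex.I) * (1 * u * Complex.I)) t := fun t =>
      (((did t).mul_const (u:ℂ)).mul_const Complex.I).cexp
    have d1 : ∀ t ∈ Set.uIcc (-T) 0, HasDerivAt
        (fun t : ℝ => (1 + (t : ℂ) / T) * Complex.exp (t * u * Complex.I) / (u * Complex.I)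
          - Complex.exp (t * u * Complex.I) / (T * (u * Complex.I) ^ 2))
        ((1 + (t:ℂ) / T) * Complex.exp (t * u * Complex.I)) t := by
      intro t _
      refine ((((((did t).div_const (T:ℂ)).const_add 1).mul (dE t)).div_const (u * Complex.I)).sub
        ((dE t).div_const (T * (u * Complex.I) ^ 2))).congr_deriv ?_
      field_simp [Complex.I_ne_zero]
      ring
    have d2 : ∀ t ∈ Set.uIcc 0 T, HasDerivAt
        (fun t : ℝ => (1 - (t : ℂ) / T) * Complex.exp (t * u * Complex.I) / (u * Complex.I)
          + Complex.exp (t * u * Complex.I) / (T * (u * Complex.I) ^ 2))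
        ((1 - (t:ℂ) / T) * Complex.exp (t * u * Complex.I)) t := by
      intro t _
      refine ((((((did t).div_const (T:ℂ)).const_sub 1).mul (dE t)).div_const (u * Complex.I)).add
        ((dE t).div_const (T * (u * Complex.I) ^ 2))).congr_deriv ?_
      field_simp [Complex.I_ne_zero]
      ring
    rw [intervalIntegral.integral_eq_sub_of_hasDerivAt d1
      (Continuous.intervalIntegrable (by fun_prop) _ _),
      intervalIntegral.integral_eq_sub_of_hasDerivAt d2
      (Continuous.intervalIntegrable (by fun_prop) _ _)]
    have hcos : ((Real.cos (T * u) : ℝ) : ℂ) =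
        (Complex.exp (T * u * Complex.I) + Complex.exp (-T * u * Complex.I)) / 2 := by
      rw [Complex.ofReal_cos, Complex.cos]
      push_cast
      ring_nf
    unfold fejK
    rw [if_neg hu]
    push_cast [-Complex.ofReal_cos]
    rw [hcos]
    simp only [mul_pow, Complex.I_sq]
    have hz : Complex.exp (0 * (u:ℂ) * Complex.I) = 1 := by simp
    rw [hz]
    field_simp [Complex.I_ne_zero]
    ring
open ArithmeticFunction ArithmeticFunction.vonMangoldt

lemma rc_term {q : ℕ} (a : ZMod q) (σ t : ℝ) (n : ℕ) :
    LSeries.term (fun n => (residueClass a n : ℂ)) (σ - t * Complex.I) n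
      = ((residueClass a n * (n:ℝ) ^ (-σ) : ℝ) : ℂ) * Complex.exp (t * Real.log n * Complex.I) := by
  rw [LSeries.term_def]
  split_ifs with h
  · subst h; rw [residueClass_apply_zero]; simp
  · have hn : (n : ℂ) ≠ 0 := by exact_mod_cast h
    have h1 : (((n:ℝ) ^ (-σ) : ℝ) : ℂ) = (n : ℂ) ^ (-(σ:ℂ)) := by
      rw [Complex.ofReal_cpow (by positivity)]; simp
    rw [Complex.ofReal_mul, h1, div_eq_mul_inv, ← Complex.cpow_neg, mul_assoc]
    congr 1
    rw [neg_sub, sub_eq_add_neg, add_comm, Complex.cpow_add _ _ hn]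
    congr 1
    rw [Complex.cpow_def_of_ne_zero hn, Complex.natCast_log]
    congr 1
    ring

lemma rc_summable {q : ℕ} (a : ZMod q) {σ : ℝ} (hσ : 1 < σ) :
    Summable fun n : ℕ => residueClass a n * (n:ℝ) ^ (-σ) := by
  have h : LSeriesSummable (fun n => (residueClass a n : ℂ)) (σ - (0:ℝ) * Complex.I) := by
    apply LSeriesSummable_of_abscissaOfAbsConv_lt_re
    refine (abscissaOfAbsConv_residueClass_le_one a).trans_lt ?_
    simp
    exact_mod_cast hσ
  have h2 : Summable fun n : ℕ => ((residueClass a n * (n:ℝ) ^ (-σ) : ℝ) : ℂ) := by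
    refine h.congr fun n => ?_
    rw [rc_term]; simp
  exact_mod_cast h2

lemma rc_hasSum {q : ℕ} (a : ZMod q) {σ : ℝ} (hσ : 1 < σ) {T : ℝ} (hT : 0 < T) (y : ℝ) :
    HasSum (fun n : ℕ => ((residueClass a n * (n:ℝ) ^ (-σ) * fejK T (Real.log n - y) : ℝ) : ℂ))
      (∫ t in Set.Icc (-T) T, ((1 - |t| / T : ℝ) : ℂ) * Complex.exp (-(t * y * Complex.I)) *
        LSeries (fun n => (residueClass a n : ℂ)) (σ - t * Complex.I)) := by
  set F : ℕ → ℝ → ℂ := fun n t => ((residueClass a n * (n:ℝ) ^ (-σ) : ℝ) : ℂ) *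
    (((1 - |t| / T : ℝ) : ℂ) * Complex.exp (t * ((Real.log n - y : ℝ) : ℂ) * Complex.I)) with hF
  have hFc : ∀ n, Continuous (F n) := fun n => by simp only [hF]; fun_prop
  have hFi : ∀ n, Integrable (F n) (volume.restrict (Set.Icc (-T) T)) := fun n =>
    (hFc n).integrableOn_Icc
  have hnorm : ∀ n t, ‖F n t‖ = (residueClass a n * (n:ℝ) ^ (-σ)) * |1 - |t| / T| := by
    intro n t
    have := Complex.norm_exp_ofReal_mul_I (t * (Real.log n - y))
    push_cast at this
    simp only [hF, norm_mul, Complex.norm_real, Real.norm_eq_abs]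
    push_cast
    rw [this, mul_one, abs_of_nonneg (residueClass_nonneg a n),
      abs_of_nonneg (Real.rpow_nonneg (Nat.cast_nonneg n) _)]
  have hs : Summable fun n => ∫ t in Set.Icc (-T) T, ‖F n t‖ := by
    simp_rw [hnorm, integral_const_mul]
    exact (rc_summable a hσ).mul_right _
  have h := hasSum_integral_of_summable_integral_norm hFi hs
  have e1 : (fun n : ℕ => ((residueClass a n * (n:ℝ) ^ (-σ) * fejK T (Real.log n - y) : ℝ) : ℂ))
      = fun n => ∫ t in Set.Icc (-T) T, F n t := by
    funext n
    simp only [hF]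
    rw [integral_const_mul, fejK_fourier hT, ← Complex.ofReal_mul]
  have e2 : ∫ t in Set.Icc (-T) T, ((1 - |t| / T : ℝ) : ℂ) * Complex.exp (-(t * y * Complex.I)) *
        LSeries (fun n => (residueClass a n : ℂ)) (σ - t * Complex.I) =
      ∫ t in Set.Icc (-T) T, ∑' n, F n t := by
    refine integral_congr_ae (ae_of_all _ fun t => ?_)
    simp only [LSeries]
    rw [← tsum_mul_left]
    congr 1
    funext n
    rw [rc_term]
    simp only [hF]
    have : Complex.exp (t * ((Real.log n - y : ℝ) : ℂ) * Complex.I) =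
        Complex.exp (-(t * y * Complex.I)) * Complex.exp (t * Real.log n * Complex.I) := by
      rw [← Complex.exp_add]; congr 1; push_cast; ring
    rw [this]
    ring
  rw [e1, e2]
  exact h

lemma fej_main {ε : ℝ} (hε : 0 < ε) {T : ℝ} (hT : 0 < T) (y : ℝ) :
    ((∫ u in Set.Ioi (0:ℝ), Real.exp (-ε * u) * fejK T (u - y) : ℝ) : ℂ) =
      ∫ t in Set.Icc (-T) T, ((1 - |t| / T : ℝ) : ℂ) * Complex.exp (-(t * y * Complex.I)) *
        (1 / ((ε:ℂ) - t * Complex.I)) := by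
  rw [← integral_complex_ofReal]
  have e1 : ∀ u : ℝ, ((Real.exp (-ε * u) * fejK T (u - y) : ℝ) : ℂ) =
      ∫ t in Set.Icc (-T) T, (Real.exp (-ε * u) : ℂ) *
        (((1 - |t| / T : ℝ) : ℂ) * Complex.exp (t * ((u - y : ℝ) : ℂ) * Complex.I)) := by
    intro u
    rw [integral_const_mul, fejK_fourier hT]
    push_cast; rfl
  simp_rw [e1]
  rw [integral_integral_swap]
  · refine integral_congr_ae (ae_of_all _ fun t => ?_)
    have hre : (-(ε:ℂ) + t * Complex.I).re < 0 := by simpa using hε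
    have e2 : ∀ u : ℝ, (Real.exp (-ε * u) : ℂ) *
        (((1 - |t| / T : ℝ) : ℂ) * Complex.exp (t * ((u - y : ℝ) : ℂ) * Complex.I)) =
        (((1 - |t| / T : ℝ) : ℂ) * Complex.exp (-(t * y * Complex.I))) *
          Complex.exp ((-(ε:ℂ) + t * Complex.I) * u) := by
      intro u
      rw [Complex.ofReal_exp, mul_left_comm, ← Complex.exp_add, mul_assoc (_ : ℂ) (Complex.exp _),
        ← Complex.exp_add]
      congr 2
      push_cast
      ring
    simp only [e2]
    rw [integral_const_mul, integral_exp_mul_complex_Ioi hre]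
    congr 1
    simp only [Complex.ofReal_zero, mul_zero, Complex.exp_zero]
    rw [neg_div, ← div_neg]
    congr 1
    ring
  · have i1 : Integrable (fun u : ℝ => (Real.exp (-ε * u) : ℂ))
        (volume.restrict (Set.Ioi (0:ℝ))) := by
      have := integrableOn_exp_mul_complex_Ioi (a := -(ε:ℂ)) (by simpa using hε) 0
      refine Integrable.congr this (ae_of_all _ fun u => ?_)
      push_cast; rfl
    have i2 : Integrable (fun t : ℝ => ((1 - |t| / T : ℝ) : ℂ))
        (volume.restrict (Set.Icc (-T) T)) := 
      (by fun_prop : Continuous fun t : ℝ => ((1 - |t| / T : ℝ) : ℂ)).integrableOn_Icc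
    refine (i1.mul_prod i2).mono (Continuous.aestronglyMeasurable ?_) (ae_of_all _ fun p => ?_)
    · unfold Function.uncurry
      fun_prop
    · have := Complex.norm_exp_ofReal_mul_I (p.2 * (p.1 - y))
      push_cast at this
      simp only [Function.uncurry, norm_mul]
      push_cast
      rw [this, mul_one]

/-- error term -/
noncomputable def fejE {q : ℕ} [NeZero q] (a : ZMod q) (T σ y : ℝ) : ℂ :=
  ∫ t in Set.Icc (-T) T, ((1 - |t| / T : ℝ) : ℂ) * Complex.exp (-(t * y * Complex.I)) *
    LFunctionResidueClassAux a ((max 1 σ : ℝ) - t * Complex.I)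

lemma cont_G {q : ℕ} [NeZero q] (a : ZMod q) :
    Continuous fun p : ℝ × ℝ => LFunctionResidueClassAux a ((max 1 p.1 : ℝ) - p.2 * Complex.I) := by
  refine (continuousOn_LFunctionResidueClassAux a).comp_continuous (f := fun p : ℝ × ℝ =>
    ((max 1 p.1 : ℝ) : ℂ) - p.2 * Complex.I) (by fun_prop) ?_
  intro p
  simp

lemma fejE_cont {q : ℕ} [NeZero q] (a : ZMod q) (T y : ℝ) :
    Continuous fun σ => fejE a T σ y := by
  unfold fejE
  refine continuous_parametric_integral_of_continuous ?_ isCompact_Icc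
  refine Continuous.mul (by fun_prop) (cont_G a)

lemma fejE_tendsto {q : ℕ} [NeZero q] (a : ZMod q) (T : ℝ) :
    Tendsto (fun y => fejE a T 1 y) atTop (𝓝 0) := by
  have h := (Real.tendsto_integral_exp_smul_cocompact (Set.indicator (Set.Icc (-T) T)
    (fun t : ℝ => ((1 - |t| / T : ℝ) : ℂ) *
      LFunctionResidueClassAux a ((max 1 1 : ℝ) - t * Complex.I)))).mono_left atTop_le_cocompact
  have h2 : Tendsto (fun y : ℝ => y / (2 * Real.pi)) atTop atTop :=
    tendsto_id.atTop_div_const (by positivity)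
  refine (h.comp h2).congr fun y => ?_
  unfold fejE
  rw [← integral_indicator measurableSet_Icc]
  simp only [Function.comp]
  congr 1
  funext t
  by_cases ht : t ∈ Set.Icc (-T) T
  · simp only [Set.indicator_of_mem ht, Circle.smul_def, Real.fourierChar_apply, smul_eq_mul]
    have : Complex.exp (((2 * Real.pi * -(t * (y / (2 * Real.pi))) : ℝ) : ℂ) * Complex.I) =
      Complex.exp (-(t * y * Complex.I)) := by
      congr 1
      have : (2 * Real.pi * -(t * (y / (2 * Real.pi))) : ℝ) = -(t * y) := by
        field_simp
      rw [this]; push_cast; ring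
    rw [this]; ring
  · simp only [Set.indicator_of_notMem ht, smul_zero]

lemma rc_identity {q : ℕ} [NeZero q] {a : ZMod q} (ha : IsUnit a) {σ : ℝ} (hσ : 1 < σ)
    {T : ℝ} (hT : 0 < T) (y : ℝ) :
    HasSum (fun n : ℕ => residueClass a n * (n:ℝ) ^ (-σ) * fejK T (Real.log n - y))
      ((q.totient : ℝ)⁻¹ * (∫ u in Set.Ioi (0:ℝ), Real.exp (-(σ - 1) * u) * fejK T (u - y))
        + (fejE a T σ y).re) := by
  have h := rc_hasSum a hσ hT y
  have h2 := Complex.hasSum_re h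
  simp only [Complex.ofReal_re] at h2
  convert h2 using 1
  have hm := fej_main (ε := σ - 1) (by linarith) hT y
  have key : (∫ t in Set.Icc (-T) T, ((1 - |t| / T : ℝ) : ℂ) * Complex.exp (-(t * y * Complex.I)) *
        LSeries (fun n => (residueClass a n : ℂ)) (σ - t * Complex.I)) =
      (q.totient : ℂ)⁻¹ * ((∫ u in Set.Ioi (0:ℝ), Real.exp (-(σ - 1) * u) * fejK T (u - y) : ℝ) : ℂ)
        + fejE a T σ y := by
    rw [hm, ← integral_const_mul, fejE, ← integral_add]
    · refine integral_congr_ae (ae_of_all _ fun t => ?_)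
      have := eqOn_LFunctionResidueClassAux ha (x := σ - t * Complex.I) (by simpa using hσ)
      simp only at this
      simp only [max_eq_right hσ.le]
      rw [this]
      have e : (σ:ℂ) - t * Complex.I - 1 = ((σ - 1 : ℝ) : ℂ) - t * Complex.I := by push_cast; ring
      rw [e]
      ring
    · refine Continuous.integrableOn_Icc ?_
      refine continuous_const.mul (Continuous.mul (by fun_prop) ?_)
      refine Continuous.div continuous_const (by fun_prop) fun t => ?_
      intro h0
      have := congrArg Complex.re h0
      simp at this
      linarith
    · refine Continuous.integrableOn_Icc ?_
      refine Continuous.mul (by fun_prop) ?_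
      exact (cont_G a).comp (f := fun t : ℝ => (σ, t)) (by fun_prop)
  rw [key]
  have : ((q.totient : ℂ)⁻¹) = (((q.totient : ℝ)⁻¹ : ℝ) : ℂ) := by push_cast; rfl
  rw [this, ← Complex.ofReal_mul]
  simp
lemma fej_int_le {ε : ℝ} (hε : 0 < ε) {T : ℝ} (hT : 0 < T) (y : ℝ) :
    (∫ u in Set.Ioi (0:ℝ), Real.exp (-ε * u) * fejK T (u - y)) ≤ ∫ u, fejK T u := by
  have hi : Integrable (fun u => fejK T (u - y)) := (fejK_integrable hT).comp_sub_right y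
  rw [← integral_sub_right_eq_self (fejK T) y]
  calc _ ≤ ∫ u in Set.Ioi (0:ℝ), fejK T (u - y) := by
        refine integral_mono_of_nonneg (ae_of_all _ fun u => ?_) hi.integrableOn ?_
        · exact mul_nonneg (Real.exp_pos _).le (fejK_nonneg hT _)
        · refine (ae_restrict_iff' measurableSet_Ioi).2 (ae_of_all _ fun u hu => ?_)
          have h1 : Real.exp (-ε * u) ≤ 1 := by
            rw [Real.exp_le_one_iff]
            nlinarith [Set.mem_Ioi.1 hu]
          have := mul_le_mul_of_nonneg_right h1 (fejK_nonneg hT (u - y))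
          simpa using this
    _ ≤ _ := setIntegral_le_integral hi (ae_of_all _ fun u => fejK_nonneg hT _)

lemma fej_int_ge {ε : ℝ} (hε : 0 < ε) {T : ℝ} (hT : 0 < T) {y : ℝ} (hy : 0 ≤ y) :
    Real.exp (-ε * (y + 1 / T)) / 4 ≤
      ∫ u in Set.Ioi (0:ℝ), Real.exp (-ε * u) * fejK T (u - y) := by
  have hi : Integrable (fun u => fejK T (u - y)) := (fejK_integrable hT).comp_sub_right y
  have hpos : 0 < 1 / T := by positivity
  have hi2 : IntegrableOn (fun u => Real.exp (-ε * u) * fejK T (u - y)) (Set.Ioi 0) := by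
    refine Integrable.mono' hi.integrableOn ?_ ?_
    · refine Measurable.aestronglyMeasurable ?_
      exact (by fun_prop : Measurable fun u : ℝ => Real.exp (-ε * u)).mul
        ((fejK_measurable T).comp (by fun_prop))
    · refine (ae_restrict_iff' measurableSet_Ioi).2 (ae_of_all _ fun u hu => ?_)
      rw [Real.norm_of_nonneg (mul_nonneg (Real.exp_pos _).le (fejK_nonneg hT _))]
      have h1 : Real.exp (-ε * u) ≤ 1 := by
        rw [Real.exp_le_one_iff]
        nlinarith [Set.mem_Ioi.1 hu]
      have := mul_le_mul_of_nonneg_right h1 (fejK_nonneg hT (u - y))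
      simpa using this
  have hsub : Set.Ioc y (y + 1 / T) ⊆ Set.Ioi 0 := fun u hu => lt_of_le_of_lt hy hu.1
  calc Real.exp (-ε * (y + 1 / T)) / 4
      = ∫ u in Set.Ioc y (y + 1 / T), Real.exp (-ε * (y + 1 / T)) * (T / 4) := by
        rw [setIntegral_const]
        simp [Measure.real, Real.volume_Ioc, hT.le]
        field_simp
    _ ≤ ∫ u in Set.Ioc y (y + 1 / T), Real.exp (-ε * u) * fejK T (u - y) := by
        refine setIntegral_mono_on ?_ (hi2.mono_set hsub) measurableSet_Ioc ?_
        · exact integrableOn_const (by simp)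
        · intro u hu
          refine mul_le_mul ?_ (fejK_ge hT (by linarith [hu.1]) (by linarith [hu.2]))
            (by positivity) (Real.exp_pos _).le
          apply Real.exp_le_exp.2
          nlinarith [hu.2]
    _ ≤ _ := by
        refine setIntegral_mono_set hi2 ?_ (LE.le.eventuallyLE hsub)
        exact ae_of_all _ fun u => mul_nonneg (Real.exp_pos _).le (fejK_nonneg hT _)

lemma rc_near_one {q : ℕ} [NeZero q] (a : ZMod q) (T : ℝ) {η : ℝ} (hη : 0 < η) :
    ∀ᶠ y in atTop, ∀ᶠ σ in 𝓝[>] (1:ℝ), |(fejE a T σ y).re| < η := by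
  have h := fejE_tendsto a T
  have h2 : ∀ᶠ y in atTop, ‖fejE a T 1 y‖ < η := by
    have := h.norm
    rw [norm_zero] at this
    exact this.eventually (gt_mem_nhds hη)
  filter_upwards [h2] with y hy
  have h3 : Tendsto (fun σ => ‖fejE a T σ y‖) (𝓝[>] (1:ℝ)) (𝓝 ‖fejE a T 1 y‖) :=
    ((fejE_cont a T y).norm.tendsto 1).mono_left nhdsWithin_le_nhds
  filter_upwards [h3.eventually (gt_mem_nhds hy)] with σ hσ
  exact (Complex.abs_re_le_norm _).trans_lt hσ

lemma rc_term_nonneg {q : ℕ} (a : ZMod q) (σ : ℝ) (n : ℕ) :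
    0 ≤ residueClass a n * (n:ℝ) ^ (-σ) :=
  mul_nonneg (residueClass_nonneg a n) (Real.rpow_nonneg (Nat.cast_nonneg n) _)

lemma rc_upper : ∃ C0 : ℝ, 0 < C0 ∧ ∀ (q : ℕ) [NeZero q] (a : ZMod q), IsUnit a →
    ∀ᶠ y in atTop, ∀ᶠ σ in 𝓝[>] (1:ℝ),
      Summable (fun n : ℕ => residueClass a n * (n:ℝ) ^ (-σ) * (1 + (Real.log n - y) ^ 2)⁻¹) ∧
      ∑' n : ℕ, residueClass a n * (n:ℝ) ^ (-σ) * (1 + (Real.log n - y) ^ 2)⁻¹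
        ≤ C0 * (q.totient : ℝ)⁻¹ := by
  set I := ∫ u, fejK 1 u with hI
  have hI0 : 0 ≤ I := integral_nonneg fun u => fejK_nonneg one_pos u
  refine ⟨12 * (I + 1), by positivity, ?_⟩
  intro q _ a ha
  have hq : 0 < (q.totient : ℝ)⁻¹ := by
    have : 0 < q.totient := Nat.totient_pos.2 (Nat.pos_of_ne_zero (NeZero.ne q))
    positivity
  have h1 := rc_near_one a 1 hq
  have h2 : ∀ᶠ y in atTop, ∀ᶠ σ in 𝓝[>] (1:ℝ), |(fejE a 1 σ (y + Real.pi)).re| <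
      (q.totient : ℝ)⁻¹ := (tendsto_atTop_add_const_right atTop Real.pi tendsto_id).eventually h1
  filter_upwards [h1, h2] with y h1 h2
  filter_upwards [h1, h2, self_mem_nhdsWithin] with σ h1 h2 hσ
  have hσ : 1 < σ := hσ
  have s1 := rc_identity ha hσ one_pos y
  have s2 := rc_identity ha hσ one_pos (y + Real.pi)
  have s3 := (s1.add s2).mul_left 6
  have hle : ∀ n : ℕ, residueClass a n * (n:ℝ) ^ (-σ) * (1 + (Real.log n - y) ^ 2)⁻¹ ≤
      6 * (residueClass a n * (n:ℝ) ^ (-σ) * fejK 1 (Real.log n - y) +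
        residueClass a n * (n:ℝ) ^ (-σ) * fejK 1 (Real.log n - (y + Real.pi))) := by
    intro n
    have := mul_le_mul_of_nonneg_left (inv_le_fejK_add (Real.log n - y)) (rc_term_nonneg a σ n)
    rw [sub_sub] at this
    linarith
  have hs : Summable (fun n : ℕ => residueClass a n * (n:ℝ) ^ (-σ) *
      (1 + (Real.log n - y) ^ 2)⁻¹) :=
    Summable.of_nonneg_of_le (fun n => mul_nonneg (rc_term_nonneg a σ n) (by positivity)) hle
      s3.summable
  refine ⟨hs, ?_⟩
  refine (hasSum_le hle hs.hasSum s3).trans ?_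
  have m1 := mul_le_mul_of_nonneg_left (fej_int_le (ε := σ - 1) (by linarith) one_pos y) hq.le
  have m2 := mul_le_mul_of_nonneg_left
    (fej_int_le (ε := σ - 1) (by linarith) one_pos (y + Real.pi)) hq.le
  rw [abs_lt] at h1 h2
  nlinarith

lemma exp_le_inv {u : ℝ} (hu : u ≤ 0) : Real.exp u ≤ 2 * (1 + u ^ 2)⁻¹ := by
  have h := Real.quadratic_le_exp_of_nonneg (x := -u) (by linarith)
  rw [← div_eq_mul_inv, le_div_iff₀ (by positivity)]
  have h2 : Real.exp u * Real.exp (-u) = 1 := by rw [← Real.exp_add]; simp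
  have h3 : (1 + u ^ 2) ≤ 2 * Real.exp (-u) := by nlinarith
  nlinarith [mul_le_mul_of_nonneg_left h3 (Real.exp_pos u).le]

lemma rc_psi_upper : ∃ C0 : ℝ, 0 < C0 ∧ ∀ (q : ℕ) [NeZero q] (a : ZMod q), IsUnit a →
    ∀ᶠ x : ℝ in atTop, ∑ n ∈ Finset.range (⌊x⌋₊ + 1), residueClass a n
      ≤ C0 * (q.totient : ℝ)⁻¹ * x := by
  obtain ⟨C0, hC0, H⟩ := rc_upper
  refine ⟨2 * C0, by positivity, ?_⟩
  intro q _ a ha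
  filter_upwards [Real.tendsto_log_atTop.eventually (H q a ha), eventually_gt_atTop 0] with x hx hx0
  have hfin : ∀ᶠ σ in 𝓝[>] (1:ℝ), ∑ n ∈ Finset.range (⌊x⌋₊ + 1),
      residueClass a n * (n:ℝ) ^ (-σ) * ((n:ℝ) / x) ≤ 2 * C0 * (q.totient : ℝ)⁻¹ := by
    filter_upwards [hx] with σ hσ
    have h1 : ∑ n ∈ Finset.range (⌊x⌋₊ + 1), residueClass a n * (n:ℝ) ^ (-σ) * ((n:ℝ) / x) ≤
        ∑ n ∈ Finset.range (⌊x⌋₊ + 1), 2 * (residueClass a n * (n:ℝ) ^ (-σ) *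
          (1 + (Real.log n - Real.log x) ^ 2)⁻¹) := by
      refine Finset.sum_le_sum fun n hn => ?_
      rcases Nat.eq_zero_or_pos n with rfl | hn0
      · rw [residueClass_apply_zero]; simp
      have hnx : (n:ℝ) ≤ x := by
        have : n ≤ ⌊x⌋₊ := by simpa [Nat.lt_succ_iff] using hn
        exact (Nat.cast_le.2 this).trans (Nat.floor_le hx0.le)
      have hn0' : (0:ℝ) < n := by exact_mod_cast hn0
      have he : (n:ℝ) / x = Real.exp (Real.log n - Real.log x) := by
        rw [Real.exp_sub, Real.exp_log hn0', Real.exp_log hx0]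
      have := mul_le_mul_of_nonneg_left (exp_le_inv (u := Real.log n - Real.log x)
        (by linarith [Real.log_le_log hn0' hnx])) (rc_term_nonneg a σ n)
      rw [he]
      linarith
    rw [← Finset.mul_sum] at h1
    have h2 := hσ.1.sum_le_tsum (Finset.range (⌊x⌋₊ + 1)) (fun n _ =>
      mul_nonneg (rc_term_nonneg a σ n) (by positivity))
    linarith [hσ.2]
  have hlim : Tendsto (fun σ : ℝ => ∑ n ∈ Finset.range (⌊x⌋₊ + 1),
      residueClass a n * (n:ℝ) ^ (-σ) * ((n:ℝ) / x)) (𝓝[>] 1)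
      (𝓝 (∑ n ∈ Finset.range (⌊x⌋₊ + 1), residueClass a n / x)) := by
    refine tendsto_finsetSum _ fun n _ => ?_
    rcases Nat.eq_zero_or_pos n with rfl | hn0
    · rw [residueClass_apply_zero]; simp
    have hn0' : (0:ℝ) < n := by exact_mod_cast hn0
    have hc : Continuous fun σ : ℝ => residueClass a n * (n:ℝ) ^ (-σ) * ((n:ℝ) / x) := by
      refine (continuous_const.mul ?_).mul continuous_const
      exact Real.continuous_const_rpow hn0'.ne' |>.comp continuous_neg
    have := (hc.tendsto 1).mono_left (nhdsWithin_le_nhds (s := Set.Ioi 1))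
    convert this using 2
    rw [Real.rpow_neg_one]
    field_simp
  have := le_of_tendsto hlim hfin
  rw [← Finset.sum_div, div_le_iff₀ hx0] at this
  linarith

lemma near_lower {δ : ℝ} (hδ : 0 < δ) : ∃ c2 : ℝ, 0 < c2 ∧ ∀ᶠ y : ℝ in atTop,
    c2 ≤ ∑ n ∈ (Finset.range (⌊Real.exp (y + δ)⌋₊ + 1)).filter (fun n : ℕ => |Real.log n - y| ≤ δ),
      vonMangoldt n / n := by
  obtain ⟨C0, hC0, H⟩ := rc_upper
  set T : ℝ := 80 * (1 + 1 / δ ^ 2) * C0 with hTdef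
  have hT : 0 < T := by positivity
  refine ⟨1 / (10 * T), by positivity, ?_⟩
  have H1 := H 1 1 isUnit_one
  have H2 := rc_near_one (1 : ZMod 1) T (η := 1 / 20) (by norm_num)
  filter_upwards [H1, H2, eventually_ge_atTop 0] with y H1 H2 hy
  have H3 : ∀ᶠ σ in 𝓝[>] (1:ℝ), 1 / 5 < Real.exp (-(σ - 1) * (y + 1 / T)) / 4 := by
    have hc : Continuous fun σ : ℝ => Real.exp (-(σ - 1) * (y + 1 / T)) / 4 := by fun_prop
    have := (hc.tendsto 1).mono_left (nhdsWithin_le_nhds (s := Set.Ioi 1))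
    refine this.eventually (lt_mem_nhds ?_)
    norm_num
  obtain ⟨σ, ⟨hs, h1⟩, h2, h3, hσ⟩ :=
    (H1.and (H2.and (H3.and self_mem_nhdsWithin))).exists
  have hσ : 1 < σ := hσ
  set N := (Finset.range (⌊Real.exp (y + δ)⌋₊ + 1)).filter
    (fun n : ℕ => |Real.log n - y| ≤ δ) with hN
  have sI := rc_identity (isUnit_one : IsUnit (1 : ZMod 1)) hσ hT y
  set D : ℝ := 4 / T * (1 + 1 / δ ^ 2) with hD
  have hDC : D * C0 = 1 / 20 := by
    rw [hD, hTdef]; field_simp; norm_num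
  have sN : HasSum (fun n : ℕ => if n ∈ N then T * (vonMangoldt n / n) else 0)
      (∑ n ∈ N, T * (vonMangoldt n / n)) := by
    have := hasSum_sum_of_ne_finset_zero (L := SummationFilter.unconditional ℕ) (f := fun n : ℕ => if n ∈ N then T * (vonMangoldt n / n) else 0)
      (s := N) (fun n hn => by simp [hn])
    convert this using 1
    refine Finset.sum_congr rfl fun n hn => ?_
    simp [hn]
  have sF := hs.hasSum.mul_left D
  have hle := hasSum_le (fun n : ℕ => ?_) sI (sN.add sF)
  · have hm := fej_int_ge (ε := σ - 1) (by linarith) hT hy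
    rw [← Finset.mul_sum] at hle
    simp only [Nat.totient_one, Nat.cast_one, inv_one, one_mul, mul_one] at hle h1
    rw [abs_lt] at h2
    have h4 := mul_le_mul_of_nonneg_left h1 (by positivity : 0 ≤ D)
    rw [div_le_iff₀ (by positivity)]
    linarith
  · have hw := rc_term_nonneg (1 : ZMod 1) σ n
    by_cases hn : n ∈ N
    · simp only [hn, if_true]
      have hf : 0 ≤ D * (residueClass (1 : ZMod 1) n * (n:ℝ) ^ (-σ) *
          (1 + (Real.log n - y) ^ 2)⁻¹) := by positivity
      have hk := mul_le_mul_of_nonneg_left (fejK_le hT (Real.log n - y)) hw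
      have hr : residueClass (1 : ZMod 1) n * (n:ℝ) ^ (-σ) ≤ vonMangoldt n / n := by
        rcases Nat.eq_zero_or_pos n with rfl | hn0
        · rw [residueClass_apply_zero]; simp
        have hn1 : (1:ℝ) ≤ n := by exact_mod_cast hn0
        rw [div_eq_mul_inv, ← Real.rpow_neg_one]
        exact mul_le_mul (residueClass_le _ n) (Real.rpow_le_rpow_of_exponent_le hn1 (by linarith))
          (by positivity) vonMangoldt_nonneg
      have := mul_le_mul_of_nonneg_right hr hT.le
      linarith
    · simp only [hn, if_false, zero_add]
      rcases Nat.eq_zero_or_pos n with rfl | hn0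
      · rw [residueClass_apply_zero]; simp
      have hn0' : (0:ℝ) < n := by exact_mod_cast hn0
      have hfar : δ < |Real.log n - y| := by
        by_contra hcon
        push Not at hcon
        apply hn
        rw [hN, Finset.mem_filter, Finset.mem_range, Nat.lt_succ_iff]
        refine ⟨?_, hcon⟩
        apply Nat.le_floor
        rw [← Real.log_le_iff_le_exp hn0']
        linarith [(abs_le.1 hcon).2]
      set u := Real.log n - y with hu
      have hu2 : δ ^ 2 ≤ u ^ 2 := by
        rw [← sq_abs u]; gcongr
      have hk : fejK T u ≤ D * (1 + u ^ 2)⁻¹ := by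
        have hupos : 0 < u ^ 2 := lt_of_lt_of_le (by positivity) hu2
        have e := sq_mul_fejK hT u
        have h3 : 2 * (1 - Real.cos (T * u)) / T ≤ 4 / T := by
          gcongr
          linarith [Real.neg_one_le_cos (T * u)]
        have hk1 : fejK T u ≤ 4 / T / u ^ 2 := by
          rw [le_div_iff₀ hupos]; linarith
        refine hk1.trans ?_
        rw [hD, ← div_eq_mul_inv, div_le_div_iff₀ hupos (by positivity), mul_assoc]
        gcongr
        have : 1 ≤ 1 / δ ^ 2 * u ^ 2 := by
          rw [one_div, ← div_eq_inv_mul, one_le_div (by positivity)]; exact hu2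
        nlinarith
      have := mul_le_mul_of_nonneg_left hk hw
      linarith
lemma sqrt_log_small {η : ℝ} (hη : 0 < η) : ∀ᶠ x : ℝ in atTop, √x * Real.log x ≤ η * x := by
  have h := (isLittleO_log_rpow_atTop (r := 1 / 2) (by norm_num)).bound hη
  filter_upwards [h, eventually_ge_atTop 1] with x hx h1
  rw [Real.norm_of_nonneg (Real.log_nonneg h1), Real.norm_of_nonneg (by positivity),
    ← Real.sqrt_eq_rpow] at hx
  have := mul_le_mul_of_nonneg_left hx (Real.sqrt_nonneg x)
  have e := Real.mul_self_sqrt (show 0 ≤ x by linarith)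
  nlinarith

lemma prime_count_lower {c : ℝ} (hc : 1 < c) : ∃ c3 : ℝ, 0 < c3 ∧ ∀ᶠ x : ℝ in atTop,
    c3 * (x / Real.log x) ≤
      (((Finset.range (⌊x⌋₊ + 1)).filter (fun p : ℕ => p.Prime ∧ x / c ≤ p)).card : ℝ) := by
  have hlc : 0 < Real.log c := Real.log_pos hc
  set δ := Real.log c / 2 with hδ
  obtain ⟨c2, hc2, H⟩ := near_lower (δ := δ) (by positivity)
  refine ⟨c2 / (2 * c), by positivity, ?_⟩
  have ht : Tendsto (fun x : ℝ => Real.log x - δ) atTop atTop :=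
    tendsto_atTop_add_const_right _ (-δ) Real.tendsto_log_atTop
  filter_upwards [ht.eventually H, ht.eventually_gt_atTop δ, eventually_gt_atTop 1,
    sqrt_log_small (η := c2 / (4 * c)) (by positivity)] with x hx hxd hx1 hxs
  have hx0 : 0 < x := by linarith
  have hlx : 0 < Real.log x := Real.log_pos hx1
  rw [sub_add_cancel, Real.exp_log hx0] at hx
  set N := (Finset.range (⌊x⌋₊ + 1)).filter
    (fun n : ℕ => |Real.log n - (Real.log x - δ)| ≤ δ) with hN
  have hmem : ∀ n ∈ N, 0 < (n:ℝ) ∧ x / c ≤ n ∧ (n:ℝ) ≤ x := by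
    intro n hn
    rw [hN, Finset.mem_filter, Finset.mem_range, Nat.lt_succ_iff] at hn
    obtain ⟨h1, h2⟩ := hn
    have hn0 : n ≠ 0 := by
      rintro rfl
      simp only [Nat.cast_zero, Real.log_zero, zero_sub, abs_neg] at h2
      linarith [le_abs_self (Real.log x - δ)]
    have hn0' : (0:ℝ) < n := by exact_mod_cast Nat.pos_of_ne_zero hn0
    refine ⟨hn0', ?_, (Nat.cast_le.2 h1).trans (Nat.floor_le hx0.le)⟩
    rw [← Real.log_le_log_iff (by positivity) hn0', Real.log_div hx0.ne' (by linarith)]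
    linarith [(abs_le.1 h2).1]
  have h1 : ∑ n ∈ N, vonMangoldt n / n ≤ (c / x) * ∑ n ∈ N, vonMangoldt n := by
    rw [Finset.mul_sum]
    refine Finset.sum_le_sum fun n hn => ?_
    obtain ⟨a1, a2, a3⟩ := hmem n hn
    rw [div_eq_mul_inv, mul_comm]
    gcongr
    rw [inv_le_comm₀ a1 (by positivity), inv_div]; exact a2
  have h2 : ∑ n ∈ N, vonMangoldt n = ∑ n ∈ N.filter (fun n => n.Prime), vonMangoldt n +
      ∑ n ∈ N.filter (fun n => ¬ n.Prime), vonMangoldt n :=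
    (Finset.sum_filter_add_sum_filter_not _ _ _).symm
  have h3 : ∑ n ∈ N.filter (fun n => ¬ n.Prime), vonMangoldt n ≤ 2 * √x * Real.log x := by
    refine le_trans ?_ (Chebyshev.psi_sub_theta_le hx1.le)
    rw [Chebyshev.psi_sub_theta_eq_sum_not_prime]
    refine Finset.sum_le_sum_of_subset_of_nonneg ?_ (fun _ _ _ => vonMangoldt_nonneg)
    intro n hn
    rw [Finset.mem_filter] at hn ⊢
    obtain ⟨a1, a2, a3⟩ := hmem n hn.1
    refine ⟨?_, hn.2⟩
    rw [Finset.mem_Ioc]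
    exact ⟨by exact_mod_cast a1, Nat.le_floor a3⟩
  have h4 : ∑ n ∈ N.filter (fun n => n.Prime), vonMangoldt n ≤
      (((Finset.range (⌊x⌋₊ + 1)).filter (fun p : ℕ => p.Prime ∧ x / c ≤ p)).card : ℝ) *
        Real.log x := by
    calc ∑ n ∈ N.filter (fun n => n.Prime), vonMangoldt n
        ≤ ∑ n ∈ N.filter (fun n => n.Prime), Real.log x := by
          refine Finset.sum_le_sum fun n hn => ?_
          obtain ⟨a1, a2, a3⟩ := hmem n (Finset.mem_filter.1 hn).1
          exact vonMangoldt_le_log.trans (Real.log_le_log a1 a3)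
      _ = ((N.filter (fun n => n.Prime)).card : ℝ) * Real.log x := by simp
      _ ≤ _ := by
          gcongr
          intro n hn
          rw [Finset.mem_filter] at hn ⊢
          exact ⟨(Finset.mem_filter.1 hn.1).1, hn.2, (hmem n hn.1).2.1⟩
  have h5 : c2 * x / c ≤ ∑ n ∈ N, vonMangoldt n := by
    have := hx.trans h1
    rw [div_le_iff₀ (by linarith)]
    calc c2 * x ≤ (c / x * ∑ n ∈ N, vonMangoldt n) * x := by gcongr
      _ = _ := by field_simp
  rw [← mul_div_assoc, div_le_iff₀ hlx]
  have e1 : c2 / (2 * c) * x = c2 * x / c - 2 * (c2 / (4 * c) * x) := by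
    field_simp; ring
  rw [e1]
  linarith

/-- number of residues r with r and r + h units -/
noncomputable def gcard (Q h : ℕ) : ℕ :=
  Nat.card {r : ZMod Q // IsUnit r ∧ IsUnit (r + (h : ZMod Q))}

lemma gcard_mul {m n : ℕ} (h : ℕ) (hmn : m.Coprime n) :
    gcard (m * n) h = gcard m h * gcard n h := by
  unfold gcard
  rw [← Nat.card_prod]
  refine Nat.card_congr ?_
  refine Equiv.trans ?_ (Equiv.subtypeProdEquivProd
    (p := fun r : ZMod m => IsUnit r ∧ IsUnit (r + (h : ZMod m)))
    (q := fun r : ZMod n => IsUnit r ∧ IsUnit (r + (h : ZMod n))))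
  refine Equiv.subtypeEquiv (ZMod.chineseRemainder hmn).toEquiv ?_
  intro r
  have e1 : IsUnit r ↔ IsUnit (ZMod.chineseRemainder hmn r) :=
    (MulEquiv.isUnit_map (ZMod.chineseRemainder hmn)).symm
  have e2 : IsUnit (r + (h : ZMod (m * n))) ↔
      IsUnit (ZMod.chineseRemainder hmn (r + (h : ZMod (m * n)))) :=
    (MulEquiv.isUnit_map (ZMod.chineseRemainder hmn)).symm
  rw [e1, e2, map_add, map_natCast, Prod.isUnit_iff, Prod.isUnit_iff]
  simp only [Prod.fst_add, Prod.snd_add, Prod.fst_natCast, Prod.snd_natCast]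
  change _ ↔ ((IsUnit (ZMod.chineseRemainder hmn r).1 ∧ _) ∧ (IsUnit (ZMod.chineseRemainder hmn r).2 ∧ _))
  tauto

lemma gcard_prime {p h : ℕ} (hp : p.Prime) (hph : ¬ p ∣ h) : gcard p h + 2 ≤ p := by
  haveI := Fact.mk hp
  unfold gcard
  have hh : (h : ZMod p) ≠ 0 := by rwa [Ne, ZMod.natCast_eq_zero_iff]
  classical
  rw [Nat.card_eq_fintype_card, Fintype.card_subtype]
  have hd : Disjoint (Finset.univ.filter fun r : ZMod p => IsUnit r ∧ IsUnit (r + (h : ZMod p)))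
      {0, -(h : ZMod p)} := by
    rw [Finset.disjoint_left]
    intro r hr hr2
    simp only [Finset.mem_filter, Finset.mem_univ, true_and, isUnit_iff_ne_zero] at hr
    simp only [Finset.mem_insert, Finset.mem_singleton] at hr2
    rcases hr2 with rfl | rfl
    · exact hr.1 rfl
    · exact hr.2 (by simp)
  have h2 : ({0, -(h : ZMod p)} : Finset (ZMod p)).card = 2 := by
    rw [Finset.card_pair]
    intro h0
    exact hh (by simpa using h0.symm)
  have := Finset.card_le_univ ((Finset.univ.filter fun r : ZMod p => IsUnit r ∧
    IsUnit (r + (h : ZMod p))).disjUnion {0, -(h : ZMod p)} hd)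
  rw [Finset.card_disjUnion, h2, ZMod.card] at this
  exact this

lemma gcard_prod (h : ℕ) (s : Finset ℕ) (hs : ∀ p ∈ s, p.Prime ∧ ¬ p ∣ h) :
    (gcard (∏ p ∈ s, p) h : ℝ) ≤
      (∏ p ∈ s, (1 - 1 / (p:ℝ))) * ((∏ p ∈ s, p).totient : ℝ) := by
  classical
  induction s using Finset.induction_on with
  | empty =>
    simp only [Finset.prod_empty, Nat.totient_one, Nat.cast_one, mul_one]
    unfold gcard
    have : Nat.card {r : ZMod 1 // IsUnit r ∧ IsUnit (r + (h : ZMod 1))} ≤ 1 :=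
      Finite.card_le_one_iff_subsingleton.2 inferInstance
    exact_mod_cast this
  | insert p s hps ih =>
    have hp := (hs p (Finset.mem_insert_self _ _))
    have ih := ih fun r hr => hs r (Finset.mem_insert_of_mem hr)
    have hcop : p.Coprime (∏ r ∈ s, r) := by
      refine Nat.Coprime.prod_right fun r hr => ?_
      rw [Nat.coprime_primes hp.1 (hs r (Finset.mem_insert_of_mem hr)).1]
      rintro rfl
      exact hps hr
    rw [Finset.prod_insert hps, Finset.prod_insert hps, gcard_mul h hcop,
      Nat.totient_mul hcop, Nat.totient_prime hp.1]
    have h2 : (2:ℝ) ≤ p := by exact_mod_cast hp.1.two_le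
    have hg : (gcard p h : ℝ) + 2 ≤ p := by exact_mod_cast gcard_prime hp.1 hp.2
    have hb : (gcard p h : ℝ) ≤ (1 - 1 / (p:ℝ)) * (p - 1) := by
      have : (1 - 1 / (p:ℝ)) * (p - 1) = p - 2 + 1 / p := by field_simp; ring
      rw [this]
      have : 0 ≤ 1 / (p:ℝ) := by positivity
      linarith
    push_cast [hp.1.one_le]
    calc (gcard p h : ℝ) * gcard (∏ r ∈ s, r) h
        ≤ ((1 - 1 / (p:ℝ)) * (p - 1)) *
          ((∏ p ∈ s, (1 - 1 / (p:ℝ))) * ((∏ p ∈ s, p).totient : ℝ)) := by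
          gcongr
          exact (Nat.cast_nonneg _).trans hb
      _ = _ := by ring

lemma exists_modulus {h : ℕ} (hh : 0 < h) {ε : ℝ} (hε : 0 < ε) :
    ∃ Q : ℕ, Q ≠ 0 ∧ (gcard Q h : ℝ) ≤ ε * (Q.totient : ℝ) := by
  classical
  set f : ℕ → ℝ := ({p | Nat.Prime p} : Set ℕ).indicator (fun n => 1 / (n:ℝ)) with hf
  have hf0 : ∀ n, 0 ≤ f n := fun n => Set.indicator_nonneg (fun _ _ => by positivity) n
  have ht := (not_summable_iff_tendsto_nat_atTop_of_nonneg hf0).1 not_summable_one_div_on_primes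
  obtain ⟨n, hn⟩ := (ht.eventually_ge_atTop
    (-Real.log ε + ∑ i ∈ Finset.range (h + 1), f i)).exists
  set s := (Finset.range n).filter (fun p => p.Prime ∧ h < p) with hs
  have hsp : ∀ p ∈ s, p.Prime ∧ ¬ p ∣ h := by
    intro p hp
    rw [hs, Finset.mem_filter] at hp
    exact ⟨hp.2.1, fun hd => absurd (Nat.le_of_dvd hh hd) (by omega)⟩
  refine ⟨∏ p ∈ s, p, Finset.prod_ne_zero_iff.2 fun p hp => (hsp p hp).1.ne_zero, ?_⟩
  refine (gcard_prod h s hsp).trans ?_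
  gcongr
  have h1 : ∏ p ∈ s, (1 - 1 / (p:ℝ)) ≤ Real.exp (-∑ p ∈ s, 1 / (p:ℝ)) := by
    rw [← Finset.sum_neg_distrib, Real.exp_sum]
    refine Finset.prod_le_prod (fun p hp => ?_) (fun p hp => ?_)
    · have : (1:ℝ) ≤ p := by exact_mod_cast (hsp p hp).1.one_le
      rw [sub_nonneg, div_le_one (by linarith)]
      exact this
    · have := Real.add_one_le_exp (-(1 / (p:ℝ)))
      linarith
  have h2 : ∑ i ∈ Finset.range n, f i ≤ ∑ p ∈ s, 1 / (p:ℝ) + ∑ i ∈ Finset.range (h + 1), f i := by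
    have e : ∑ p ∈ s, 1 / (p:ℝ) = ∑ p ∈ s, f p := by
      refine Finset.sum_congr rfl fun p hp => ?_
      rw [hf, Set.indicator_of_mem]
      exact (hsp p hp).1
    rw [e]
    have : ∑ i ∈ Finset.range n, f i ≤ ∑ i ∈ s ∪ Finset.range (h + 1), f i := by
      rw [← Finset.sum_filter_add_sum_filter_not (Finset.range n) (fun p => p.Prime)]
      have z : ∑ i ∈ (Finset.range n).filter (fun p => ¬ p.Prime), f i = 0 := by
        refine Finset.sum_eq_zero fun p hp => ?_
        rw [hf, Set.indicator_of_notMem]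
        exact (Finset.mem_filter.1 hp).2
      rw [z, add_zero]
      refine Finset.sum_le_sum_of_subset_of_nonneg ?_ (fun i _ _ => hf0 i)
      intro p hp
      rw [Finset.mem_filter] at hp
      rw [Finset.mem_union, hs, Finset.mem_filter]
      by_cases hlt : h < p
      · exact Or.inl ⟨hp.1, hp.2, hlt⟩
      · exact Or.inr (by simp; omega)
    refine this.trans ?_
    have := Finset.sum_union_inter (s₁ := s) (s₂ := Finset.range (h + 1)) (f := f)
    have h3 : 0 ≤ ∑ i ∈ s ∩ Finset.range (h + 1), f i := Finset.sum_nonneg fun i _ => hf0 i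
    linarith
  refine h1.trans ?_
  rw [← Real.le_log_iff_exp_le hε]
  linarith

lemma pair_upper {h : ℕ} (hh : 0 < h) {ε : ℝ} (hε : 0 < ε) : ∀ᶠ x : ℝ in atTop,
    (((Finset.range (⌊x⌋₊ + 1)).filter (fun p : ℕ => p.Prime ∧ (p + h).Prime)).card : ℝ)
      ≤ ε * (x / Real.log x) := by
  classical
  obtain ⟨C0, hC0, H⟩ := rc_psi_upper
  obtain ⟨Q, hQ, hg⟩ := exists_modulus hh (ε := ε / (8 * C0)) (by positivity)
  haveI : NeZero Q := ⟨hQ⟩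
  have hphi : 0 < (Q.totient : ℝ) := by
    exact_mod_cast Nat.totient_pos.2 (Nat.pos_of_ne_zero hQ)
  set G : Finset (ZMod Q) :=
    Finset.univ.filter fun r => IsUnit r ∧ IsUnit (r + (h : ZMod Q)) with hG
  have hGc : (G.card : ℝ) ≤ ε / (8 * C0) * (Q.totient : ℝ) := by
    refine le_trans (le_of_eq ?_) hg
    rw [gcard, Nat.card_eq_fintype_card, Fintype.card_subtype]
  have HG : ∀ᶠ x : ℝ in atTop, ∀ r ∈ G, ∑ n ∈ Finset.range (⌊x⌋₊ + 1), residueClass r n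
      ≤ C0 * (Q.totient : ℝ)⁻¹ * x := by
    rw [Filter.eventually_all_finset]
    intro r hr
    exact H Q r (Finset.mem_filter.1 hr).2.1
  filter_upwards [HG, sqrt_log_small (η := ε / 8) (by positivity), eventually_gt_atTop 1,
    Real.tendsto_sqrt_atTop.eventually_ge_atTop ((Q:ℝ) + 1)] with x hx hxs hx1 hxQ
  have hx0 : 0 < x := by linarith
  have hlx : 0 < Real.log x := Real.log_pos hx1
  set P := (Finset.range (⌊x⌋₊ + 1)).filter (fun p : ℕ => p.Prime ∧ (p + h).Prime) with hP
  set B := P.filter (fun p : ℕ => √x < p) with hB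
  have hsmall : ((P.filter (fun p : ℕ => ¬ √x < p)).card : ℝ) ≤ √x + 1 := by
    have hsub : P.filter (fun p : ℕ => ¬ √x < p) ⊆ Finset.range (⌊√x⌋₊ + 1) := by
      intro p hp
      rw [Finset.mem_filter, not_lt] at hp
      rw [Finset.mem_range, Nat.lt_succ_iff]
      exact Nat.le_floor hp.2
    have := Finset.card_le_card hsub
    rw [Finset.card_range] at this
    have h2 : ((P.filter (fun p : ℕ => ¬ √x < p)).card : ℝ) ≤ (⌊√x⌋₊ : ℝ) + 1 := by
      exact_mod_cast this
    linarith [Nat.floor_le (Real.sqrt_nonneg x)]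
  have hbig : (B.card : ℝ) * (Real.log x / 2) ≤ ε / 8 * x := by
    have hcop : ∀ p ∈ B, ∀ m : ℕ, p ≤ m → m.Prime → IsUnit (m : ZMod Q) := by
      intro p hp m hpm hm
      have hpx := (Finset.mem_filter.1 hp).2
      rw [ZMod.isUnit_iff_coprime, hm.coprime_iff_not_dvd]
      intro hd
      have h1 := Nat.le_of_dvd (Nat.pos_of_ne_zero hQ) hd
      have h2 : (p:ℝ) ≤ Q := by exact_mod_cast hpm.trans h1
      linarith
    calc (B.card : ℝ) * (Real.log x / 2) = ∑ p ∈ B, Real.log x / 2 := by simp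
      _ ≤ ∑ p ∈ B, ∑ r ∈ G, residueClass r p := by
          refine Finset.sum_le_sum fun p hp => ?_
          have hp' := Finset.mem_filter.1 hp
          have hpP := (Finset.mem_filter.1 hp'.1).2
          have hrG : (p : ZMod Q) ∈ G := by
            rw [hG, Finset.mem_filter]
            refine ⟨Finset.mem_univ _, hcop p hp p le_rfl hpP.1, ?_⟩
            have := hcop p hp (p + h) (by omega) hpP.2
            push_cast at this
            exact this
          refine le_trans ?_ (Finset.single_le_sum (f := fun r => residueClass r p)
            (fun r _ => residueClass_nonneg r p) hrG)
          have : residueClass (p : ZMod Q) p = Real.log p := by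
            rw [residueClass, Set.indicator_of_mem (by simp), vonMangoldt_apply_prime hpP.1]
          rw [this, ← Real.log_sqrt hx0.le]
          exact Real.log_le_log (by positivity) hp'.2.le
      _ = ∑ r ∈ G, ∑ p ∈ B, residueClass r p := Finset.sum_comm
      _ ≤ ∑ r ∈ G, C0 * (Q.totient : ℝ)⁻¹ * x := by
          refine Finset.sum_le_sum fun r hr => le_trans ?_ (hx r hr)
          refine Finset.sum_le_sum_of_subset_of_nonneg ?_ (fun n _ _ => residueClass_nonneg r n)
          exact (Finset.filter_subset _ _).trans (Finset.filter_subset _ _)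
      _ = G.card * (C0 * (Q.totient : ℝ)⁻¹ * x) := by simp
      _ ≤ (ε / (8 * C0) * (Q.totient : ℝ)) * (C0 * (Q.totient : ℝ)⁻¹ * x) := by gcongr
      _ = ε / 8 * x := by field_simp
  have hsplit : (P.card : ℝ) = B.card + (P.filter (fun p : ℕ => ¬ √x < p)).card := by
    exact_mod_cast (Finset.card_filter_add_card_filter_not (s := P) (fun p : ℕ => √x < p)).symm
  rw [← mul_div_assoc, le_div_iff₀ hlx, hsplit]
  have hs1 : 1 ≤ √x := by
    have : (0:ℝ) ≤ Q := Nat.cast_nonneg _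
    linarith
  have := mul_le_mul_of_nonneg_right hsmall hlx.le
  have h6 := mul_le_mul_of_nonneg_right hs1 hlx.le
  nlinarith
lemma autoCorr_finset (S : Finset ℕ) (f : ℝ → ℂ) :
    autoCorr ((fun p : ℕ => (p : ℝ)) '' (S : Set ℕ)) f =
      ((S.card : ℂ))⁻¹ * ∑ p ∈ S, ∑ q ∈ S, f ((p : ℝ) - q) := by
  have hinj : Function.Injective (fun p : ℕ => (p : ℝ)) := Nat.cast_injective
  have key : ∀ g : ℝ → ℂ, ∑ᶠ x ∈ (fun p : ℕ => (p : ℝ)) '' (S : Set ℕ), g x =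
      ∑ p ∈ S, g p := by
    intro g
    rw [finsum_mem_image hinj.injOn, finsum_mem_coe_finset]
  unfold autoCorr
  rw [key, Set.ncard_image_of_injective _ hinj, Set.ncard_coe_finset]
  congr 1
  exact Finset.sum_congr rfl fun p _ => key _

lemma primesR_inter (a b : ℝ) (ha : 0 < a) :
    PrimesR ∩ Set.Icc a b = (fun p : ℕ => (p : ℝ)) ''
      (((Finset.range (⌊b⌋₊ + 1)).filter (fun p : ℕ => p.Prime ∧ a ≤ p) : Finset ℕ) : Set ℕ) := by
  ext x
  constructor
  · rintro ⟨⟨p, hp, h⟩, h1, h2⟩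
    have hx : x = p := by
      rcases h with h | h
      · exact h
      · have : (0:ℝ) ≤ p := Nat.cast_nonneg _
        linarith
    subst hx
    refine ⟨p, ?_, rfl⟩
    rw [Finset.mem_coe, Finset.mem_filter, Finset.mem_range]
    exact ⟨Nat.lt_succ_of_le (Nat.le_floor h2), hp, h1⟩
  · rintro ⟨p, hp, rfl⟩
    rw [Finset.mem_coe, Finset.mem_filter, Finset.mem_range] at hp
    obtain ⟨h1, h2, h3⟩ := hp
    refine ⟨⟨p, h2, Or.inl rfl⟩, h3, ?_⟩
    exact (Nat.le_floor_iff' h2.ne_zero).1 (Nat.lt_succ_iff.1 h1)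

lemma offdiag_bound (S : Finset ℕ) (f : ℝ → ℂ) (M : ℝ) (R : ℕ) (hM : ∀ t, ‖f t‖ ≤ M)
    (hR : ∀ t : ℝ, (R : ℝ) < |t| → f t = 0) (K : ℝ)
    (hK : ∀ h ∈ Finset.Icc 1 R, ((S.filter (fun p => p + h ∈ S)).card : ℝ) ≤ K) :
    ‖∑ p ∈ S, ∑ q ∈ S, f ((p : ℝ) - q) - S.card * f 0‖ ≤ M * (2 * (R * K)) := by
  have hM0 : 0 ≤ M := (norm_nonneg _).trans (hM 0)
  have e : ∑ p ∈ S, ∑ q ∈ S, f ((p : ℝ) - q) - S.card * f 0 =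
      ∑ p ∈ S, ∑ q ∈ S, if p = q then 0 else f ((p : ℝ) - q) := by
    have : (S.card : ℂ) * f 0 = ∑ p ∈ S, ∑ q ∈ S, if p = q then f 0 else 0 := by
      simp
    rw [this, ← Finset.sum_sub_distrib]
    refine Finset.sum_congr rfl fun p _ => ?_
    rw [← Finset.sum_sub_distrib]
    refine Finset.sum_congr rfl fun q _ => ?_
    by_cases h : p = q
    · simp [h]
    · simp [h]
  have hb : ∀ p q : ℕ, ‖(if p = q then 0 else f ((p : ℝ) - q) : ℂ)‖ ≤
      M * ∑ h ∈ Finset.Icc 1 R, ((if p + h = q then (1:ℝ) else 0) +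
        (if q + h = p then (1:ℝ) else 0)) := by
    intro p q
    have hnn : ∀ h ∈ Finset.Icc 1 R, (0:ℝ) ≤ ((if p + h = q then (1:ℝ) else 0) +
        (if q + h = p then (1:ℝ) else 0)) := by
      intro h _
      split_ifs <;> norm_num
    have h0 := mul_nonneg hM0 (Finset.sum_nonneg hnn)
    by_cases hpq : p = q
    · rw [if_pos hpq, norm_zero]; exact h0
    rw [if_neg hpq]
    by_cases hlt : (R : ℝ) < |(p : ℝ) - q|
    · rw [hR _ hlt, norm_zero]; exact h0
    refine (hM _).trans ?_
    refine le_mul_of_one_le_right hM0 ?_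
    rw [not_lt, abs_le] at hlt
    have l1 : q ≤ p + R := by
      have : (q:ℝ) ≤ p + R := by linarith [hlt.1]
      exact_mod_cast this
    have l2 : p ≤ q + R := by
      have : (p:ℝ) ≤ q + R := by linarith [hlt.2]
      exact_mod_cast this
    rcases lt_or_gt_of_ne hpq with h | h
    · refine le_trans ?_ (Finset.single_le_sum hnn (a := q - p)
        (Finset.mem_Icc.2 ⟨by omega, by omega⟩))
      rw [if_pos (by omega)]
      split_ifs <;> norm_num
    · refine le_trans ?_ (Finset.single_le_sum hnn (a := p - q)
        (Finset.mem_Icc.2 ⟨by omega, by omega⟩))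
      rw [if_pos (show q + (p - q) = p by omega)]
      split_ifs <;> norm_num
  have hs1 : ∀ h : ℕ, ∑ p ∈ S, ∑ q ∈ S, (if p + h = q then (1:ℝ) else 0) =
      ((S.filter (fun p => p + h ∈ S)).card : ℝ) := by
    intro h
    simp [Finset.sum_ite_eq]
  have hs2 : ∀ h : ℕ, ∑ p ∈ S, ∑ q ∈ S, (if q + h = p then (1:ℝ) else 0) =
      ((S.filter (fun p => p + h ∈ S)).card : ℝ) := by
    intro h
    rw [Finset.sum_comm]
    exact hs1 h
  rw [e]
  calc _ ≤ ∑ p ∈ S, ∑ q ∈ S, ‖(if p = q then 0 else f ((p : ℝ) - q) : ℂ)‖ :=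
        (norm_sum_le _ _).trans (Finset.sum_le_sum fun p _ => norm_sum_le _ _)
    _ ≤ ∑ p ∈ S, ∑ q ∈ S, M * ∑ h ∈ Finset.Icc 1 R, ((if p + h = q then (1:ℝ) else 0) +
        (if q + h = p then (1:ℝ) else 0)) :=
        Finset.sum_le_sum fun p _ => Finset.sum_le_sum fun q _ => hb p q
    _ = M * ∑ h ∈ Finset.Icc 1 R, (2 * ((S.filter (fun p => p + h ∈ S)).card : ℝ)) := by
        simp_rw [← Finset.mul_sum]
        congr 1
        have : ∀ p ∈ S, ∑ q ∈ S, ∑ h ∈ Finset.Icc 1 R, ((if p + h = q then (1:ℝ) else 0) +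
            (if q + h = p then (1:ℝ) else 0)) = ∑ h ∈ Finset.Icc 1 R, ∑ q ∈ S,
            ((if p + h = q then (1:ℝ) else 0) + (if q + h = p then (1:ℝ) else 0)) :=
          fun p _ => Finset.sum_comm
        rw [Finset.sum_congr rfl this, Finset.sum_comm, Finset.mul_sum]
        refine Finset.sum_congr rfl fun h _ => ?_
        simp_rw [Finset.sum_add_distrib]
        rw [hs1, hs2]; ring
    _ ≤ M * ∑ h ∈ Finset.Icc 1 R, (2 * K) := by
        refine mul_le_mul_of_nonneg_left (Finset.sum_le_sum fun h hh => ?_) hM0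
        linarith [hK h hh]
    _ = M * (2 * (R * K)) := by
        rw [Finset.sum_const, Nat.card_Icc, nsmul_eq_mul, Nat.add_sub_cancel]; ring

lemma autocorr_main (a b : ℕ → ℝ) (hpos : ∀ n, 0 < a n)
    (hw : Tendsto (fun n => b n - a n) atTop atTop)
    (hc : ∃ c : ℝ, 1 < c ∧ ∃ N : ℕ, ∀ n > N, c * a n ≤ b n)
    (f : ℝ → ℂ) (hf : Continuous f) (hfc : HasCompactSupport f) :
      Tendsto (fun n => autoCorr (PrimesR ∩ Set.Icc (a n) (b n)) f) atTop (nhds (f 0)) := by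
  obtain ⟨c, hc1, N, hN⟩ := hc
  have hb : Tendsto b atTop atTop :=
    tendsto_atTop_mono (fun n => by linarith [hpos n]) hw
  obtain ⟨M, hM⟩ := hf.bounded_above_of_compact_support hfc
  obtain ⟨R, hR⟩ : ∃ R : ℕ, ∀ t : ℝ, (R : ℝ) < |t| → f t = 0 := by
    obtain ⟨r, hr⟩ := hfc.isCompact.isBounded.subset_closedBall (0:ℝ)
    obtain ⟨R, hRr⟩ := exists_nat_ge r
    refine ⟨R, fun t ht => ?_⟩
    by_contra hne
    have := hr (subset_tsupport f (Function.mem_support.2 hne))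
    rw [Metric.mem_closedBall, dist_zero_right, Real.norm_eq_abs] at this
    linarith
  have hM0 : 0 ≤ M := (norm_nonneg _).trans (hM 0)
  obtain ⟨c3, hc3, hlow⟩ := prime_count_lower hc1
  rw [Metric.tendsto_nhds]
  intro δ hδ
  set ε : ℝ := c3 * δ / (2 * (2 * M * R + 1)) with hεd
  have hden : 0 < 2 * M * R + 1 := by positivity
  have hε : 0 < ε := by positivity
  have hup : ∀ᶠ x : ℝ in atTop, ∀ h ∈ Finset.Icc 1 R,
      (((Finset.range (⌊x⌋₊ + 1)).filter (fun p : ℕ => p.Prime ∧ (p + h).Prime)).card : ℝ)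
        ≤ ε * (x / Real.log x) := by
    rw [Filter.eventually_all_finset]
    intro h hh
    exact pair_upper (by have := (Finset.mem_Icc.1 hh).1; omega) hε
  filter_upwards [hb.eventually hlow, hb.eventually hup, hb.eventually (eventually_gt_atTop 1),
    eventually_gt_atTop N] with n h1 h2 h3 h4
  rw [primesR_inter _ _ (hpos n), autoCorr_finset]
  set S := (Finset.range (⌊b n⌋₊ + 1)).filter (fun p : ℕ => p.Prime ∧ a n ≤ p) with hS
  set X := b n / Real.log (b n) with hX
  have hXpos : 0 < X := div_pos (by linarith) (Real.log_pos h3)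
  have hcard : c3 * X ≤ (S.card : ℝ) := by
    refine h1.trans ?_
    have : a n ≤ b n / c := by
      rw [le_div_iff₀ (by linarith)]; linarith [hN n h4]
    refine Nat.cast_le.2 (Finset.card_le_card ?_)
    intro p hp
    rw [Finset.mem_filter] at hp ⊢
    exact ⟨hp.1, hp.2.1, this.trans hp.2.2⟩
  have hSpos : (0:ℝ) < S.card := lt_of_lt_of_le (by positivity) hcard
  have hSne : (S.card : ℂ) ≠ 0 := by
    intro h
    have : S.card = 0 := by exact_mod_cast h
    rw [this] at hSpos
    simp at hSpos
  have hoff := offdiag_bound S f M R hM hR (ε * X) (by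
    intro h hh
    refine le_trans (Nat.cast_le.2 (Finset.card_le_card ?_)) (h2 h hh)
    intro p hp
    rw [Finset.mem_filter] at hp ⊢
    have q1 := (Finset.mem_filter.1 hp.1)
    have q2 := (Finset.mem_filter.1 hp.2)
    exact ⟨q1.1, q1.2.1, q2.2.1⟩)
  rw [dist_eq_norm]
  have e : (S.card : ℂ)⁻¹ * ∑ p ∈ S, ∑ q ∈ S, f ((p : ℝ) - q) - f 0 =
      (S.card : ℂ)⁻¹ * (∑ p ∈ S, ∑ q ∈ S, f ((p : ℝ) - q) - S.card * f 0) := by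
    field_simp
  rw [e, norm_mul, norm_inv, Complex.norm_natCast, inv_mul_lt_iff₀ hSpos]
  refine hoff.trans_lt (lt_of_lt_of_le ?_ (mul_le_mul_of_nonneg_right hcard hδ.le))
  have e2 : c3 * δ = ε * (2 * (2 * M * R + 1)) := by
    rw [hεd]; field_simp
  have e3 : c3 * X * δ = ε * X * (2 * (2 * M * R + 1)) := by
    rw [mul_right_comm, e2]; ring
  rw [e3]
  have hεX : 0 < ε * X := by positivity
  have : 0 ≤ M * R := by positivity
  nlinarith [mul_nonneg hεX.le this]


end aux

theorem primes_counting_autocorrelation_positive_intervals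
    (a b : ℕ → ℝ) (hpos : ∀ n, 0 < a n) (hab : ∀ n, a n < b n)
    (hw : Tendsto (fun n => b n - a n) atTop atTop)
    (hc : ∃ c : ℝ, 1 < c ∧ ∃ N : ℕ, ∀ n > N, c * a n ≤ b n) :
    ∀ f : ℝ → ℂ, Continuous f → HasCompactSupport f →
      Tendsto (fun n => autoCorr (PrimesR ∩ Set.Icc (a n) (b n)) f) atTop (nhds (f 0)) := by
  intro f hf hfc
  exact autocorr_main a b hpos hw hc f hf hfc
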